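/- Let w₀, w₂ ∈ ℂ with w₀ ≠ 0 and w₀^N ≠ 1. Then the operator ℒ = Ψ_w(−A₀A₁ ⊗ A₁^{−1}) ∘ Υ satisfies (A₂ ⊗ A₁) ∘ ℒ ∘ (A₁ ⊗ A₀) = ℒ in End(ℂ^N ⊗ ℂ^N). -/

import Mathlib

open Finset Kronecker

/-- `A₀ e_k = q^{2k} e_k` on `ℂ^N` (basis indexed by `ZMod N`). -/
noncomputable def A0 (N : ℕ) (q : ℂ) : Matrix (ZMod N) (ZMod N) ℂ :=
  Matrix.diagonal fun k => q ^ (2 * k.val)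

/-- `A₁ e_k = e_{k+1}`. -/
noncomputable def A1 (N : ℕ) : Matrix (ZMod N) (ZMod N) ℂ :=
  fun j k => if j = k + 1 then 1 else 0

/-- `A₂ e_k = q^{1−2k} e_{k−1}`. -/
noncomputable def A2 (N : ℕ) (q : ℂ) : Matrix (ZMod N) (ZMod N) ℂ :=
  fun j k => if j = k - 1 then q ^ ((1 : ℤ) - 2 * (k.val : ℤ)) else 0

/-- The operator `Ψ_w(U)` (with the scalar normalization `h(w₀)` omitted). -/
noncomputable def Psi (N : ℕ) (q w₀ w₂ : ℂ) {A : Type*} [Ring A] [Algebra ℂ A] (U : A) : A :=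
  ∑ i ∈ Finset.range N,
    (∏ j ∈ Finset.range i, (-q⁻¹ * w₂) / (1 - w₀⁻¹ * q ^ (2 * (j + 1)))) • U ^ i

/-- `Υ := (1/N) Σ_{i,j=0}^{N−1} q^{−2ij−j} A₀^i ⊗ (A₁A₀)^{−j}` on `ℂ^N ⊗ ℂ^N`. -/
noncomputable def Ups (N : ℕ) [NeZero N] (q : ℂ) :
    Matrix (ZMod N × ZMod N) (ZMod N × ZMod N) ℂ :=
  (N : ℂ)⁻¹ • ∑ i ∈ Finset.range N, ∑ j ∈ Finset.range N,
    (q ^ (-(2 * (i : ℤ) * (j : ℤ) + (j : ℤ)))) • ((A0 N q ^ i) ⊗ₖ ((A1 N * A0 N q)⁻¹ ^ j))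

/-- `ℒ := Ψ_w(−A₀A₁ ⊗ A₁⁻¹) ∘ Υ`, the transposed basic matrix dilogarithm (up to the
scalar normalization `h(w₀)`). -/
noncomputable def Ldil (N : ℕ) [NeZero N] (q w₀ w₂ : ℂ) :
    Matrix (ZMod N × ZMod N) (ZMod N × ZMod N) ℂ :=
  Psi N q w₀ w₂ (-((A0 N q * A1 N) ⊗ₖ (A1 N)⁻¹)) * Ups N q

lemma q_val_succ (N : ℕ) [NeZero N] (hN : 3 ≤ N) (q : ℂ) (hq : q ^ N = 1) (k : ZMod N) :
    q ^ (k + 1).val = q ^ k.val * q := by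
  haveI : Fact (1 < N) := ⟨by omega⟩
  rw [ZMod.val_add, ZMod.val_one, ← pow_succ]
  conv_rhs => rw [← Nat.mod_add_div (k.val + 1) N, pow_add, pow_mul, hq, one_pow, mul_one]

lemma A0_mul_A1 (N : ℕ) [NeZero N] (hN : 3 ≤ N) (q : ℂ) (hq : q ^ N = 1) :
    A0 N q * A1 N = q ^ 2 • (A1 N * A0 N q) := by
  ext j k
  rw [Matrix.smul_apply, A0, Matrix.diagonal_mul, Matrix.mul_diagonal, A1]
  by_cases h : j = k + 1
  · subst h
    simp only [if_true, smul_eq_mul]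
    rw [mul_comm 2 (k+1).val, mul_comm 2 k.val, pow_mul, pow_mul, q_val_succ N hN q hq]
    ring
  · simp [h]

lemma A1_pow (N : ℕ) [NeZero N] (n : ℕ) (j k : ZMod N) :
    (A1 N ^ n) j k = if j = k + n then 1 else 0 := by
  induction n generalizing j k with
  | zero => simp [Matrix.one_apply]
  | succ n ih =>
    rw [pow_succ, Matrix.mul_apply]
    simp only [ih, A1]
    simp only [mul_ite, mul_one, mul_zero, Finset.sum_ite_eq', Finset.sum_ite_eq,
      Finset.mem_univ, if_true]
    congr 1
    push_cast
    rw [add_assoc, add_comm 1 (n : ZMod N)]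

lemma A1_pow_N (N : ℕ) [NeZero N] : A1 N ^ N = 1 := by
  ext j k
  rw [A1_pow]
  simp [Matrix.one_apply]

lemma A0_pow_N (N : ℕ) [NeZero N] (q : ℂ) (hq : q ^ N = 1) : A0 N q ^ N = 1 := by
  rw [A0, Matrix.diagonal_pow, ← Matrix.diagonal_one]
  congr 1
  ext k
  simp only [Pi.pow_apply]
  rw [← pow_mul, mul_comm, pow_mul, hq, one_pow]

lemma A0_pow_mul_A1 (N : ℕ) [NeZero N] (hN : 3 ≤ N) (q : ℂ) (hq : q ^ N = 1) (n : ℕ) :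
    A0 N q ^ n * A1 N = q ^ (2 * n) • (A1 N * A0 N q ^ n) := by
  induction n with
  | zero => simp
  | succ n ih =>
    rw [pow_succ, mul_assoc, A0_mul_A1 N hN q hq, mul_smul_comm, ← mul_assoc, ih,
      smul_mul_assoc, smul_smul, mul_assoc]
    congr 1
    ring

lemma B_pow (N : ℕ) [NeZero N] (hN : 3 ≤ N) (q : ℂ) (hq : q ^ N = 1) (n : ℕ) :
    (A1 N * A0 N q) ^ (n + 1) = q ^ ((n + 1) * n) • (A1 N ^ (n + 1) * A0 N q ^ (n + 1)) := by
  induction n with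
  | zero => simp
  | succ n ih =>
    rw [pow_succ, ih, smul_mul_assoc, mul_assoc, ← mul_assoc (A0 N q ^ (n + 1)),
      A0_pow_mul_A1 N hN q hq, smul_mul_assoc, mul_smul_comm, smul_smul, ← pow_add,
      mul_assoc (A1 N), ← pow_succ, ← mul_assoc, ← pow_succ]
    congr 2
    ring

lemma B_pow_N (N : ℕ) [NeZero N] (hN : 3 ≤ N) (q : ℂ) (hq : q ^ N = 1) :
    (A1 N * A0 N q) ^ N = 1 := by
  obtain ⟨n, rfl⟩ : ∃ n, N = n + 1 := ⟨N - 1, by omega⟩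
  rw [B_pow _ hN q hq, A1_pow_N, A0_pow_N _ q hq, pow_mul, hq]
  simp

lemma isUnit_det_of_pow {n : Type*} [Fintype n] [DecidableEq n] (M : Matrix n n ℂ) (N : ℕ)
    (hN : N ≠ 0) (h : M ^ N = 1) : IsUnit M.det := by
  rw [← isUnit_pow_iff hN, ← Matrix.det_pow, h]
  simp

lemma A2_mul_B (N : ℕ) [NeZero N] (hN : 3 ≤ N) (q : ℂ) (hq : q ^ N = 1) (hq0 : q ≠ 0) :
    A2 N q * (A1 N * A0 N q) = q⁻¹ • 1 := by
  ext j k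
  rw [← mul_assoc, A0, Matrix.mul_diagonal, Matrix.mul_apply]
  simp only [A1, A2, mul_ite, mul_one, mul_zero, Finset.sum_ite_eq', Finset.sum_ite_eq,
      Finset.mem_univ, if_true, add_sub_cancel_right, Matrix.smul_apply, Matrix.one_apply,
      smul_eq_mul]
  by_cases h : j = k
  · subst h
    simp only [if_true]
    have h2 : q ^ ((1 : ℤ) - 2 * ((j + 1).val : ℤ)) = q * ((q ^ (j + 1).val) ^ 2)⁻¹ := by
      rw [zpow_sub₀ hq0, zpow_one, mul_comm (2 : ℤ), zpow_mul, zpow_natCast, div_eq_mul_inv]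
      norm_cast
    rw [h2, q_val_succ N hN q hq, mul_comm 2, pow_mul]
    have := pow_ne_zero j.val hq0
    field_simp
  · simp [h]

lemma Cpow_mul {A : Type*} [Ring A] [Algebra ℂ A] (a c : A) (x : ℂ) (h : c * a = x • (a * c))
    (n : ℕ) : c ^ n * a = x ^ n • (a * c ^ n) := by
  induction n with
  | zero => simp
  | succ n ih =>
    rw [pow_succ, mul_assoc, h, mul_smul_comm, ← mul_assoc, ih, smul_mul_assoc, smul_smul,
      mul_assoc, ← pow_succ, ← pow_succ']

lemma sum_shift {M : Type*} [AddCommMonoid M] (N : ℕ) (hN : N ≠ 0) (f : ℕ → M)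
    (h : f N = f 0) : ∑ i ∈ Finset.range N, f (i + 1) = ∑ i ∈ Finset.range N, f i := by
  obtain ⟨n, rfl⟩ : ∃ n, N = n + 1 := ⟨N - 1, by omega⟩
  rw [Finset.sum_range_succ, h, Finset.sum_range_succ' f]

lemma Ups_rel (N : ℕ) [NeZero N] (hN : 3 ≤ N) (q : ℂ) (hq : q ^ N = 1) (hq0 : q ≠ 0) :
    (A2 N q ⊗ₖ A1 N) * Ups N q * (A1 N ⊗ₖ A0 N q) = Ups N q := by
  have hN0 : N ≠ 0 := by omega
  have hB := B_pow_N N hN q hq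
  have hdet := isUnit_det_of_pow _ N hN0 hB
  have hBC := Matrix.mul_nonsing_inv _ hdet
  have hCB := Matrix.nonsing_inv_mul _ hdet
  have hA2 : A2 N q = q⁻¹ • (A1 N * A0 N q)⁻¹ := by
    rw [← mul_one (A2 N q), ← hBC, ← mul_assoc, A2_mul_B N hN q hq hq0, smul_mul_assoc, one_mul]
  have hAB := A0_mul_A1 N hN q hq
  have hA21 : A2 N q * (A1 N * A0 N q) = q⁻¹ • 1 := A2_mul_B N hN q hq hq0
  have hCN : ((A1 N * A0 N q)⁻¹) ^ N = 1 := by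
    rw [Matrix.inv_pow', hB, inv_one]
  have hCA : (A1 N * A0 N q)⁻¹ * A0 N q = q ^ 2 • (A0 N q * (A1 N * A0 N q)⁻¹) := by
    have h1 : A0 N q * (A1 N * A0 N q) = q ^ 2 • ((A1 N * A0 N q) * A0 N q) := by
      rw [← mul_assoc, hAB, smul_mul_assoc]
    calc (A1 N * A0 N q)⁻¹ * A0 N q
        = (A1 N * A0 N q)⁻¹ * (A0 N q * (A1 N * A0 N q)) * (A1 N * A0 N q)⁻¹ := by
          rw [mul_assoc, mul_assoc (A0 N q), hBC, mul_one]
      _ = _ := by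
          rw [h1, mul_smul_comm, ← mul_assoc, hCB, one_mul, smul_mul_assoc]
  have hCn := Cpow_mul _ _ _ hCA
  set C := (A1 N * A0 N q)⁻¹ with hC
  let F : ℕ → ℕ → Matrix (ZMod N × ZMod N) (ZMod N × ZMod N) ℂ := fun i j =>
    (q ^ (-(2 * (i : ℤ) * (j : ℤ) + (j : ℤ)))) • ((A0 N q ^ i) ⊗ₖ (C ^ j))
  have hzN : ∀ m : ℤ, q ^ ((N : ℤ) * m) = 1 := fun m => by
    rw [zpow_mul, zpow_natCast, hq, one_zpow]
  have hF1 : ∀ j, F N j = F 0 j := fun j => by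
    simp only [F]
    rw [A0_pow_N N q hq, pow_zero]
    congr 1
    rw [show -(2 * (N : ℤ) * (j : ℤ) + (j : ℤ)) = N * (-2 * j) + (-(2 * ((0 : ℕ) : ℤ) * (j : ℤ) + j))
      by push_cast; ring, zpow_add₀ hq0, hzN, one_mul]
  have hF2 : ∀ i, F i N = F i 0 := fun i => by
    simp only [F]
    rw [hCN, pow_zero]
    congr 1
    rw [show -(2 * (i : ℤ) * (N : ℤ) + (N : ℤ)) = N * (-2 * i - 1) by ring, hzN]
    simp
  have hU : Ups N q = (N : ℂ)⁻¹ • ∑ i ∈ Finset.range N, ∑ j ∈ Finset.range N, F i j := rfl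
  have hS : ∑ i ∈ Finset.range N, ∑ j ∈ Finset.range N, F (i + 1) (j + 1)
      = ∑ i ∈ Finset.range N, ∑ j ∈ Finset.range N, F i j := by
    rw [sum_shift N hN0 (fun i => ∑ j ∈ Finset.range N, F i (j + 1))]
    · exact Finset.sum_congr rfl fun i _ => sum_shift N hN0 (F i) (hF2 i)
    · exact Finset.sum_congr rfl fun j _ => hF1 (j + 1)
  have hterm : ∀ i j, (A2 N q ⊗ₖ A1 N) * F (i + 1) (j + 1) * (A1 N ⊗ₖ A0 N q) = F i j := by
    intro i j
    simp only [F]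
    rw [mul_smul_comm, smul_mul_assoc, ← Matrix.mul_kronecker_mul, ← Matrix.mul_kronecker_mul]
    have e1 : A2 N q * A0 N q ^ (i + 1) * A1 N = (q ^ (2 * (i + 1)) * q⁻¹) • A0 N q ^ i := by
      rw [mul_assoc, A0_pow_mul_A1 N hN q hq, mul_smul_comm, pow_succ', ← mul_assoc (A1 N),
        ← mul_assoc, hA21, smul_mul_assoc, one_mul, smul_smul]
    have e2 : A1 N * C ^ (j + 1) * A0 N q = ((q ^ 2) ^ (j + 1)) • C ^ j := by
      rw [mul_assoc, hCn, mul_smul_comm, pow_succ' C, ← mul_assoc (A0 N q), ← mul_assoc,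
        ← mul_assoc, hBC, one_mul]
    rw [e1, e2, Matrix.smul_kronecker, Matrix.kronecker_smul, smul_smul, smul_smul]
    congr 1
    rw [← pow_mul, ← zpow_natCast, ← zpow_natCast, ← zpow_neg_one, ← zpow_add₀ hq0,
      ← zpow_add₀ hq0, ← zpow_add₀ hq0]
    congr 1
    push_cast
    ring
  rw [hU]
  conv_lhs => rw [← hS]
  rw [mul_smul_comm, smul_mul_assoc]
  simp only [Finset.mul_sum, Finset.sum_mul, hterm]

lemma Psi_comm {A : Type*} [Ring A] [Algebra ℂ A] (N : ℕ) (q w₀ w₂ : ℂ) (X U : A)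
    (h : Commute X U) : Commute X (Psi N q w₀ w₂ U) := by
  unfold Psi
  exact Commute.sum_right _ _ _ fun i _ => (h.pow_right i).smul_right _

lemma comm_U (N : ℕ) [NeZero N] (hN : 3 ≤ N) (q : ℂ) (hq : q ^ N = 1) (hq0 : q ≠ 0) :
    Commute (A2 N q ⊗ₖ A1 N) (-((A0 N q * A1 N) ⊗ₖ (A1 N)⁻¹)) := by
  have hN0 : N ≠ 0 := by omega
  have hB := B_pow_N N hN q hq
  have hdet := isUnit_det_of_pow _ N hN0 hB
  have hdet1 := isUnit_det_of_pow _ N hN0 (A1_pow_N N)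
  have h2 := A2_mul_B N hN q hq hq0
  have h2' : (A1 N * A0 N q) * A2 N q = q⁻¹ • 1 := by
    have hBC := Matrix.mul_nonsing_inv _ hdet
    have hA2 : A2 N q = q⁻¹ • (A1 N * A0 N q)⁻¹ := by
      rw [← mul_one (A2 N q), ← hBC, ← mul_assoc, h2, smul_mul_assoc, one_mul]
    rw [hA2, mul_smul_comm, hBC]
  refine Commute.neg_right ?_
  unfold Commute SemiconjBy
  rw [← Matrix.mul_kronecker_mul, ← Matrix.mul_kronecker_mul, A0_mul_A1 N hN q hq,
    mul_smul_comm, smul_mul_assoc, h2, h2', Matrix.mul_nonsing_inv _ hdet1,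
    Matrix.nonsing_inv_mul _ hdet1]

/-- The intertwining relation for the diagonal generator `X₅`:
`(A₂ ⊗ A₁) ∘ ℒ ∘ (A₁ ⊗ A₀) = ℒ`. -/
theorem Ldil_X5_relation (N : ℕ) [NeZero N] (hN : 3 ≤ N) (hNodd : Odd N)
    (q : ℂ) (hq : IsPrimitiveRoot q N)
    (w₀ w₂ : ℂ) (hw₀ : w₀ ≠ 0) (hw₀N : w₀ ^ N ≠ 1) :
    (A2 N q ⊗ₖ A1 N) * Ldil N q w₀ w₂ * (A1 N ⊗ₖ A0 N q) = Ldil N q w₀ w₂ := by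
  have hq1 := hq.pow_eq_one
  have hq0 : q ≠ 0 := hq.ne_zero (by omega)
  unfold Ldil
  rw [← mul_assoc, (Psi_comm N q w₀ w₂ _ _ (comm_U N hN q hq1 hq0)).eq, mul_assoc, mul_assoc,
    ← mul_assoc (A2 N q ⊗ₖ A1 N), Ups_rel N hN q hq1 hq0]
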